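/- Let B ⊆ A be an inclusion of simple unital C*-algebras with common unit admitting a finite-index conditional expectation, let E₀ : A → B be the minimal conditional expectation, and let C := C*(B ∪ C_A(B)). Then C belongs to IMS(B, A, E₀): there exists a conditional expectation F : A → C such that (E₀|_C) ∘ F = E₀, and moreover F has finite index. -/

import Mathlib

/-!
Write `D` for the relative commutant of `B` in `A`, and `l` for a quasi-basis of `E₀`. Simplicity
makes centres trivial, so `E₀` is scalar valued on `D`, and so is the index functional
`d ↦ ∑ i, l i * d * star (l i)`.

The decisive fact is that the minimal expectation is centralized by `D`, that is
`E₀ (d * x) = E₀ (x * d)` for all `d ∈ D` and `x ∈ A` (`minimal_central`). Every invertible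
self-adjoint `k ∈ D` gives another finite-index expectation, a multiple of `x ↦ E₀ (k * x * k)`, and
minimality bounds its index from below (`minimal_inequality`). Differentiating along
`k = exp (t • s)` shows that the index functional is a multiple of `E₀` on `D` (`index_eq`). There
is a linear map `σ` on `D` with `E₀ (d * x) = E₀ (x * σ d)`, and the index functional satisfies the
same relation with `σ⁻¹` in place of `σ`; hence `σ² = 1`, and positivity of `σ` gives `σ = 1`.

By a Bessel inequality an orthonormal family in `D`, for the inner product `E₀ (star x * y)`, has at
most as many elements as the index (`ortho_card_le`), so `D` has a finite orthonormal basis `d`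
(`exists_ortho_basis`). The expectation sought is the orthogonal projection
`F x = ∑ j, E₀ (x * d j) * star (d j)`. It is a bimodule map over `B` clearly and over `D` by
centrality, hence over the C*-algebra they generate (`proj_bimodule`), and `E₀ ∘ F = E₀` because `d`
expands `1`. Positivity of `F` follows from that of `E₀` by compressing with the negative part of
`F (star x * x)` (`nonneg_of_compressions`). Finally `z = ∑ j, star (d j) * d j` is central in `D`
and at least `1`, and the elements `l i * z ^ (-1/2)` form a quasi-basis of `F`
(`proj_quasiBasis`).
-/


namespace RegularInclusion

variable {A : Type*} [NormedRing A] [StarRing A] [CStarRing A] [CompleteSpace A]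
  [NormedAlgebra ℂ A] [StarModule ℂ A]

/-- A conditional expectation of `A` onto the subset `B`: a `ℂ`-linear positive
`B`-bimodular projection of `A` onto `B`. -/
def IsCondExp (B : Set A) (E : A →ₗ[ℂ] A) : Prop :=
  (∀ x, E x ∈ B) ∧ (∀ b ∈ B, E b = b) ∧
  (∀ x, ∃ y, E (star x * x) = star y * y) ∧
  (∀ b₁ ∈ B, ∀ b₂ ∈ B, ∀ x, E (b₁ * x * b₂) = b₁ * E x * b₂)

/-- `l` is a right quasi-basis for `E`, witnessing finite index. -/
def IsRightQB (E : A →ₗ[ℂ] A) {n : ℕ} (l : Fin n → A) : Prop :=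
  ∀ x, x = ∑ i, E (x * l i) * star (l i)

/-- The centralizer (relative commutant) `C_A(B)` of `B` in `A`. -/
def cent (B : Set A) : Set A := {x | ∀ b ∈ B, x * b = b * x}

/-- The normalizer `N_A(B) = {u ∈ U(A) : uBu* = B}` of `B` in `A`. -/
def normalizer (B : Set A) : Set A :=
  {u | u ∈ unitary A ∧ (fun x => u * x * star u) '' B = B}

/-- The set `U(B)` of unitaries of `B`. -/
def UB (B : Set A) : Set A := {b | b ∈ B ∧ b ∈ unitary A}

/-- The set `U(B)·U(C_A(B))` of products of a unitary of `B` and a unitary of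
the centralizer of `B`. -/
def UBC (B : Set A) : Set A :=
  {x | ∃ b c, b ∈ B ∧ b ∈ unitary A ∧ c ∈ cent B ∧ c ∈ unitary A ∧ x = b * c}

/-- Simplicity of the C*-algebra (given as the subset `S` of `A`): the only closed
two-sided ideals of `S` are `{0}` and `S`. -/
def IsSimpleCStar (S : Set A) : Prop :=
  ∀ I : Set A, I ⊆ S → IsClosed I → (0 : A) ∈ I →
    (∀ x ∈ I, ∀ y ∈ I, x + y ∈ I) →
    (∀ x ∈ I, ∀ b ∈ S, x * b ∈ I ∧ b * x ∈ I) →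
    I = {0} ∨ I = S

/-- The intermediate C*-subalgebra `C := C*(B ∪ C_A(B))` generated by `B` and the
centralizer of `B`. -/
def genC (B : Set A) : StarSubalgebra ℂ A :=
  (StarAlgebra.adjoin ℂ (B ∪ cent B)).topologicalClosure

/-- Regularity of the inclusion `B ⊆ A`: the normalizer of `B` generates `A` as a
C*-algebra. -/
def IsRegular (B : Set A) : Prop :=
  (StarAlgebra.adjoin ℂ (normalizer B)).topologicalClosure = ⊤

/-- `E₀` is the minimal conditional expectation of `A` onto `B`: the finite-index
conditional expectation whose (scalar) Watatani index is least among all finite-index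
conditional expectations onto `B`. -/
def IsMinimalCondExp (B : Set A) (E₀ : A →ₗ[ℂ] A) : Prop :=
  IsCondExp B E₀ ∧
  ∃ (r₀ : ℝ) (n : ℕ) (l : Fin n → A), IsRightQB E₀ l ∧
    (∑ i, l i * star (l i)) = (r₀ : ℂ) • 1 ∧
    ∀ E : A →ₗ[ℂ] A, IsCondExp B E → ∀ (m : ℕ) (μ : Fin m → A), IsRightQB E μ →
      ∀ r : ℝ, (∑ i, μ i * star (μ i)) = (r : ℂ) • 1 → r₀ ≤ r

/-! ### Algebra of conditional expectations and commutants -/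

section Basic

variable {M : Type*} [CStarAlgebra M] {B : StarSubalgebra ℂ M} {E : M →ₗ[ℂ] M}

lemma IsCondExp.map_mul_left (hE : IsCondExp (B : Set M) E) {b : M} (hb : b ∈ B) (x : M) :
    E (b * x) = b * E x := by
  simpa using hE.2.2.2 b hb 1 (one_mem B) x

lemma IsCondExp.map_mul_right (hE : IsCondExp (B : Set M) E) {b : M} (hb : b ∈ B) (x : M) :
    E (x * b) = E x * b := by
  simpa using hE.2.2.2 1 (one_mem B) b hb x

lemma IsCondExp.map_one (hE : IsCondExp (B : Set M) E) : E 1 = 1 :=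
  hE.2.1 1 (one_mem B)

/-- A positive linear map is `*`-preserving; here by polarization of `star (1 + x) * (1 + x)`
and `star (1 + I • x) * (1 + I • x)`. -/
lemma IsCondExp.map_star (hE : IsCondExp (B : Set M) E) (x : M) : E (star x) = star (E x) := by
  have hsa : ∀ y : M, star (E (star y * y)) = E (star y * y) := fun y => by
    obtain ⟨w, hw⟩ := hE.2.2.1 y
    rw [hw]; simp
  have key : ∀ y : M, star (E y) + star (E (star y)) = E y + E (star y) := fun y => by
    have h1 := hsa (1 + y)
    have h2 := hsa y
    have h3 : star (1 + y) * (1 + y) = 1 + y + star y + star y * y := by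
      simp only [star_add, star_one]; noncomm_ring
    rw [h3] at h1
    simp only [map_add, star_add, h2, hE.map_one, star_one] at h1
    have := add_right_cancel h1
    rw [add_assoc, add_assoc] at this
    exact add_left_cancel this
  have h1 := key x
  have h2 := key (Complex.I • x)
  simp only [star_smul, map_smul, RCLike.star_def, Complex.conj_I, neg_smul, map_neg, star_neg,
    neg_neg] at h2
  have h3 : -(star (E x)) + star (E (star x)) = E x - E (star x) := by
    have : Complex.I • (-(star (E x)) + star (E (star x))) =
        Complex.I • (E x - E (star x)) := by
      rw [smul_add, smul_sub, smul_neg, h2, sub_eq_add_neg]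
    exact smul_right_injective M Complex.I_ne_zero this
  have h4 : (2 : ℂ) • star (E (star x)) = (2 : ℂ) • E x := by
    rw [two_smul, two_smul]
    calc star (E (star x)) + star (E (star x))
        = (star (E x) + star (E (star x))) + (-(star (E x)) + star (E (star x))) := by abel
      _ = E x + E x := by rw [h1, h3]; abel
  have h5 := smul_right_injective M (two_ne_zero' ℂ) h4
  rw [← h5, star_star]

/-- The commutant of a `*`-closed set is a `*`-subalgebra; this is the `*`-part of that. -/
lemma star_mem_cent {d : M} (hd : d ∈ cent (B : Set M)) : star d ∈ cent (B : Set M) := by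
  intro b hb
  have := congrArg star (hd (star b) (star_mem hb))
  simpa using this.symm

lemma mul_mem_cent {d e : M} (hd : d ∈ cent (B : Set M)) (he : e ∈ cent (B : Set M)) :
    d * e ∈ cent (B : Set M) := by
  intro b hb
  rw [mul_assoc, he b hb, ← mul_assoc, hd b hb, mul_assoc]

lemma add_mem_cent {d e : M} (hd : d ∈ cent (B : Set M)) (he : e ∈ cent (B : Set M)) :
    d + e ∈ cent (B : Set M) := by
  intro b hb
  rw [add_mul, mul_add, hd b hb, he b hb]

lemma smul_mem_cent (c : ℂ) {d : M} (hd : d ∈ cent (B : Set M)) :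
    c • d ∈ cent (B : Set M) := by
  intro b hb
  rw [smul_mul_assoc, hd b hb, mul_smul_comm]

lemma one_mem_cent : (1 : M) ∈ cent (B : Set M) := fun b _ => by simp

lemma sub_mem_cent {d e : M} (hd : d ∈ cent (B : Set M)) (he : e ∈ cent (B : Set M)) :
    d - e ∈ cent (B : Set M) := by
  intro b hb
  rw [sub_mul, mul_sub, hd b hb, he b hb]

lemma sum_mem_cent {ι : Type*} (s : Finset ι) {d : ι → M}
    (hd : ∀ i ∈ s, d i ∈ cent (B : Set M)) : ∑ i ∈ s, d i ∈ cent (B : Set M) := by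
  intro b hb
  rw [Finset.sum_mul, Finset.mul_sum]
  exact Finset.sum_congr rfl fun i hi => hd i hi b hb

/-- The adjoint form of the quasi-basis expansion. -/
lemma IsRightQB.expand_left (hE : IsCondExp (B : Set M) E) {n : ℕ} {l : Fin n → M}
    (hl : IsRightQB E l) (x : M) : x = ∑ i, l i * E (star (l i) * x) := by
  have := congrArg star (hl (star x))
  rw [star_star, star_sum] at this
  refine this.trans (Finset.sum_congr rfl fun i _ => ?_)
  rw [star_mul, star_star, ← hE.map_star, star_mul, star_star]

/-- The centre of a simple unital C*-algebra is trivial: for `c` in the spectrum of a central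
element `z`, the closed ideal generated by `z - c` is proper, hence zero. -/
lemma eq_smul_one_of_central (S : StarSubalgebra ℂ M) (hS : IsClosed (S : Set M))
    (hsimple : IsSimpleCStar (S : Set M)) {z : M} (hz : z ∈ S)
    (hc : ∀ s ∈ S, z * s = s * z) : ∃ c : ℂ, z = c • (1 : M) := by
  rcases subsingleton_or_nontrivial M with h | h
  · exact ⟨0, Subsingleton.elim _ _⟩
  obtain ⟨c, hcs⟩ := spectrum.nonempty z
  refine ⟨c, ?_⟩
  set w : M := z - c • 1 with hw
  have hwS : w ∈ S := sub_mem hz (S.smul_mem (one_mem S) c)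
  have hwc : ∀ s ∈ S, w * s = s * w := fun s hs => by
    simp [hw, sub_mul, mul_sub, hc s hs]
  have hnu : ¬ IsUnit w := by
    intro hu
    apply hcs
    have : (algebraMap ℂ M c - z) = -w := by
      rw [hw, Algebra.algebraMap_eq_smul_one]; abel
    change IsUnit (algebraMap ℂ M c - z)
    rw [this]; exact hu.neg
  set I₀ : Set M := (fun s => w * s) '' (S : Set M) with hI₀
  have hI₀S : I₀ ⊆ S := by
    rintro _ ⟨s, hs, rfl⟩; exact mul_mem hwS hs
  have hsub : closure I₀ ⊆ S := closure_minimal hI₀S hS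
  have hmem : w ∈ closure I₀ := subset_closure ⟨1, one_mem S, by simp⟩
  have := hsimple (closure I₀) hsub isClosed_closure
    (subset_closure ⟨0, zero_mem S, by simp⟩)
    (fun x hx y hy => by
      refine map_mem_closure₂ continuous_add hx hy ?_
      rintro _ ⟨s, hs, rfl⟩ _ ⟨t, ht, rfl⟩
      exact ⟨s + t, add_mem hs ht, by simp [mul_add]⟩)
    (fun x hx b hb => by
      constructor
      · refine map_mem_closure (f := fun x => x * b) (by fun_prop) hx ?_
        rintro _ ⟨s, hs, rfl⟩
        exact ⟨s * b, mul_mem hs hb, by simp [mul_assoc]⟩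
      · refine map_mem_closure (f := fun x => b * x) (by fun_prop) hx ?_
        rintro _ ⟨s, hs, rfl⟩
        exact ⟨b * s, mul_mem hb hs, by
          simp only [← mul_assoc, hwc b hb]⟩)
  rcases this with h0 | h1
  · rw [h0] at hmem
    exact sub_eq_zero.mp hmem
  · exfalso
    -- units are open, so a closed ideal containing `1` contains a unit of the form `w * s`
    have h1mem : (1 : M) ∈ closure I₀ := by rw [h1]; exact one_mem S
    obtain ⟨_, hu, ⟨s, hs, rfl⟩⟩ :=
      mem_closure_iff.mp h1mem {x | IsUnit x} Units.isOpen isUnit_one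
    have hcomm : Commute w s := hwc s hs
    exact hnu (hcomm.isUnit_mul_iff.mp hu).1

/-- On the relative commutant a conditional expectation is scalar valued. -/
lemma IsCondExp.exists_scalar (hE : IsCondExp (B : Set M) E) (hB : IsClosed (B : Set M))
    (hsimple : IsSimpleCStar (B : Set M)) {d : M} (hd : d ∈ cent (B : Set M)) :
    ∃ c : ℂ, E d = c • (1 : M) := by
  refine eq_smul_one_of_central B hB hsimple (hE.1 d) fun b hb => ?_
  rw [← hE.map_mul_right hb, hd b hb, hE.map_mul_left hb]

/-- For `d` in the relative commutant of `B`, the element `∑ i, l i * d * star (l i)` is central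
in the whole algebra, hence scalar. -/
lemma exists_scalar_index {n : ℕ} {l : Fin n → M} (hE : IsCondExp (B : Set M) E)
    (hl : IsRightQB E l) (hsimple : IsSimpleCStar (Set.univ : Set M)) {d : M}
    (hd : d ∈ cent (B : Set M)) :
    ∃ c : ℂ, ∑ i, l i * d * star (l i) = c • (1 : M) := by
  refine eq_smul_one_of_central (⊤ : StarSubalgebra ℂ M) (by simp) (by simpa using hsimple)
    (by simp) fun a _ => ?_
  have h1 : a * ∑ i, l i * d * star (l i)
      = ∑ i, ∑ j, l j * E (star (l j) * (a * l i)) * d * star (l i) := by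
    rw [Finset.mul_sum]
    refine Finset.sum_congr rfl fun i _ => ?_
    rw [← mul_assoc, ← mul_assoc]
    conv_lhs => rw [hl.expand_left hE (a * l i)]
    rw [Finset.sum_mul, Finset.sum_mul]
  have h2 : (∑ j, l j * d * star (l j)) * a
      = ∑ j, ∑ i, l j * E (star (l j) * (a * l i)) * d * star (l i) := by
    rw [Finset.sum_mul]
    refine Finset.sum_congr rfl fun j _ => ?_
    rw [mul_assoc]
    conv_lhs => rw [hl (star (l j) * a)]
    rw [Finset.mul_sum]
    refine Finset.sum_congr rfl fun i _ => ?_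
    have := hd _ (hE.1 (star (l j) * (a * l i)))
    rw [mul_assoc (l j) (E _) d, ← this, mul_assoc (star (l j)) a (l i)]
    simp only [mul_assoc]
  rw [h1, h2, Finset.sum_comm]

end Basic

/-! ### Positivity, contractivity and faithfulness -/

section Order

variable {M : Type*} [CStarAlgebra M] [PartialOrder M] [StarOrderedRing M]
  {B : StarSubalgebra ℂ M} {E : M →ₗ[ℂ] M}

lemma IsCondExp.nonneg (hE : IsCondExp (B : Set M) E) {x : M} (hx : 0 ≤ x) : 0 ≤ E x := by
  obtain ⟨y, rfl⟩ := CStarAlgebra.nonneg_iff_eq_star_mul_self.mp hx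
  obtain ⟨w, hw⟩ := hE.2.2.1 y
  rw [hw]; exact star_mul_self_nonneg w

lemma IsCondExp.mono (hE : IsCondExp (B : Set M) E) {x y : M} (hxy : x ≤ y) : E x ≤ E y := by
  have := hE.nonneg (sub_nonneg.mpr hxy)
  rwa [map_sub, sub_nonneg] at this

/-- The Kadison–Schwarz inequality, from positivity of `E` at `x - E x`. -/
lemma IsCondExp.schwarz (hE : IsCondExp (B : Set M) E) (x : M) :
    star (E x) * E x ≤ E (star x * x) := by
  have h := hE.nonneg (star_mul_self_nonneg (x - E x))
  have hx := hE.1 x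
  have h2 : E (star (x - E x) * (x - E x)) = E (star x * x) - star (E x) * E x := by
    have e : star (x - E x) * (x - E x)
        = star x * x - star x * E x - star (E x) * x + star (E x) * E x := by
      rw [star_sub]; noncomm_ring
    rw [e]
    simp only [map_add, map_sub]
    rw [hE.map_mul_right hx, hE.map_mul_left (star_mem hx), hE.map_mul_left (star_mem hx),
      hE.map_star, hE.2.1 _ hx]
    abel
  rw [h2] at h
  exact sub_nonneg.mp h

lemma IsCondExp.norm_le (hE : IsCondExp (B : Set M) E) (x : M) : ‖E x‖ ≤ 1 * ‖x‖ := by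
  have h1 : star (E x) * E x ≤ algebraMap ℝ M (‖x‖ ^ 2) := by
    refine (hE.schwarz x).trans ((hE.mono CStarAlgebra.star_mul_le_algebraMap_norm_sq).trans ?_)
    have : (algebraMap ℝ M (‖x‖ ^ 2)) = ((‖x‖ ^ 2 : ℝ) : ℂ) • (1 : M) := by
      rw [Algebra.algebraMap_eq_smul_one, Complex.coe_smul]
    rw [this, map_smul, hE.map_one]
  have h2 := (CStarAlgebra.norm_le_iff_le_algebraMap _ (by positivity)
    (star_mul_self_nonneg _)).mpr h1
  rw [CStarRing.norm_star_mul_self, ← sq] at h2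
  rw [one_mul]
  exact (pow_le_pow_iff_left₀ (norm_nonneg _) (norm_nonneg _) two_ne_zero).mp h2

lemma IsCondExp.continuous (hE : IsCondExp (B : Set M) E) : Continuous E :=
  (E.mkContinuous 1 hE.norm_le).continuous

/-- A finite-index conditional expectation is faithful: `E (star x * x) = 0` forces every
coefficient `E (star (l i) * x)` to vanish, by the Kadison–Schwarz inequality. -/
lemma IsCondExp.faithful (hE : IsCondExp (B : Set M) E) {n : ℕ} {l : Fin n → M}
    (hl : IsRightQB E l) {x : M} (hx : E (star x * x) = 0) : x = 0 := by
  rw [hl.expand_left hE x]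
  refine Finset.sum_eq_zero fun i _ => ?_
  have h1 : star (star (l i) * x) * (star (l i) * x) ≤ ((‖l i‖ ^ 2 : ℝ) : ℂ) • (star x * x) := by
    have h := star_left_conjugate_le_conjugate
      (CStarAlgebra.mul_star_le_algebraMap_norm_sq (a := l i)) x
    have e : star x * algebraMap ℝ M (‖l i‖ ^ 2) * x = ((‖l i‖ ^ 2 : ℝ) : ℂ) • (star x * x) := by
      rw [Algebra.algebraMap_eq_smul_one, Complex.coe_smul]
      simp
    rw [e] at h
    simpa [mul_assoc] using h
  have h2 := (hE.schwarz (star (l i) * x)).trans (hE.mono h1)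
  rw [map_smul, hx, smul_zero] at h2
  have h3 := le_antisymm h2 (star_mul_self_nonneg _)
  rw [CStarRing.star_mul_self_eq_zero_iff] at h3
  rw [h3, mul_zero]

lemma IsCondExp.faithful_of_nonneg (hE : IsCondExp (B : Set M) E) {n : ℕ} {l : Fin n → M}
    (hl : IsRightQB E l) {x : M} (hx0 : 0 ≤ x) (hx : E x = 0) : x = 0 := by
  obtain ⟨y, rfl⟩ := CStarAlgebra.nonneg_iff_eq_star_mul_self.mp hx0
  rw [hE.faithful hl hx, mul_zero]

lemma IsCondExp.nondegenerate (hE : IsCondExp (B : Set M) E) {n : ℕ} {l : Fin n → M}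
    (hl : IsRightQB E l) {y : M} (hy : ∀ x, E (x * y) = 0) : y = 0 :=
  hE.faithful hl (hy (star y))

/-- A scalar that is positive in the algebra is a nonnegative real number. -/
lemma smul_one_nonneg [Nontrivial M] {c : ℂ} (h : 0 ≤ c • (1 : M)) :
    ((c.re : ℝ) : ℂ) = c ∧ 0 ≤ c.re := by
  have hsa : star (c • (1 : M)) = c • 1 := (IsSelfAdjoint.of_nonneg h)
  rw [star_smul, star_one] at hsa
  have hcc : star c = c := smul_left_injective ℂ (one_ne_zero (α := M)) hsa
  have hre : ((c.re : ℝ) : ℂ) = c := Complex.conj_eq_iff_re.mp hcc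
  refine ⟨hre, ?_⟩
  by_contra! hneg
  have h1 : 0 ≤ (-c.re) • (1 : M) := smul_nonneg (by linarith) zero_le_one
  have h2 : (-c.re) • (1 : M) = -(c • (1 : M)) := by
    rw [neg_smul]; congr 1
    conv_rhs => rw [← hre]
    rw [Complex.coe_smul]
  rw [h2] at h1
  have h3 : c • (1 : M) = 0 := le_antisymm (neg_nonneg.mp h1) h
  rcases smul_eq_zero.mp h3 with h4 | h4
  · simp [h4] at hneg
  · exact one_ne_zero h4

end Order

/-! ### The minimal expectation is centralized by the relative commutant -/

section Trace

variable {M : Type*} [CStarAlgebra M] [PartialOrder M] [StarOrderedRing M]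
  {B : StarSubalgebra ℂ M} {E : M →ₗ[ℂ] M} {n : ℕ} {l : Fin n → M}

/-- Minimality tested against the conditional expectations `x ↦ e⁻¹ • E (k * x * k)`, where
`k` is an invertible self-adjoint element of the relative commutant and `e = E (k * k)`; such a
map has the quasi-basis `√e • (l i * k⁻¹)`. -/
lemma minimal_inequality [Nontrivial M] (hE : IsCondExp (B : Set M) E) (hl : IsRightQB E l)
    {r₀ : ℝ}
    (hmin : ∀ E' : M →ₗ[ℂ] M, IsCondExp (B : Set M) E' → ∀ (m : ℕ) (μ : Fin m → M),
      IsRightQB E' μ → ∀ r : ℝ, (∑ i, μ i * star (μ i)) = (r : ℂ) • 1 → r₀ ≤ r)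
    {k k' : M} (hk : k ∈ cent (B : Set M)) (hk' : k' ∈ cent (B : Set M))
    (hks : star k = k) (hks' : star k' = k') (hkk' : k * k' = 1) (hk'k : k' * k = 1)
    {e c : ℂ} (he : E (k * k) = e • (1 : M))
    (hc : ∑ i, l i * (k' * k') * star (l i) = c • (1 : M)) :
    r₀ ≤ (c * e).re := by
  have he0 : 0 ≤ e • (1 : M) := by
    rw [← he]; apply hE.nonneg
    simpa [hks] using star_mul_self_nonneg k
  have hc0 : 0 ≤ c • (1 : M) := by
    rw [← hc]
    refine Finset.sum_nonneg fun i _ => ?_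
    have := mul_star_self_nonneg (l i * k')
    simpa [hks', mul_assoc] using this
  obtain ⟨her, hepos⟩ := smul_one_nonneg he0
  obtain ⟨hcr, -⟩ := smul_one_nonneg hc0
  have hene : e.re ≠ 0 := by
    intro h0
    have : E (star k * k) = 0 := by rw [hks, he, ← her, h0]; simp
    have hk0 := hE.faithful hl this
    rw [hk0, zero_mul] at hkk'
    exact zero_ne_one hkk'
  have hce : (c * e).re = e.re * c.re := by
    rw [← her, ← hcr, ← Complex.ofReal_mul]; simp [mul_comm]
  rw [hce]
  set ε : ℝ := e.re with hε
  have hεpos : 0 < ε := lt_of_le_of_ne hepos (Ne.symm hene)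
  have hεC : (ε : ℂ) ≠ 0 := by exact_mod_cast hene
  set E' : M →ₗ[ℂ] M :=
    ((ε : ℂ)⁻¹) • (E ∘ₗ LinearMap.mulLeft ℂ k ∘ₗ LinearMap.mulRight ℂ k) with hE'
  have hE'a : ∀ x, E' x = ((ε : ℂ)⁻¹) • E (k * (x * k)) := fun x => by simp [hE']
  have hE'mod : ∀ b₁ ∈ B, ∀ b₂ ∈ B, ∀ x, E' (b₁ * x * b₂) = b₁ * E' x * b₂ := by
    intro b₁ h₁ b₂ h₂ x
    have : k * (b₁ * x * b₂ * k) = b₁ * (k * (x * k)) * b₂ := by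
      rw [mul_assoc _ b₂ k, ← hk b₂ h₂]
      simp only [← mul_assoc]
      rw [hk b₁ h₁]
    rw [hE'a, hE'a, this, hE.2.2.2 b₁ h₁ b₂ h₂]
    simp
  have hE'1 : E' 1 = 1 := by
    rw [hE'a, one_mul, he, ← her, smul_smul, inv_mul_cancel₀ hεC, one_smul]
  have hCE : IsCondExp (B : Set M) E' := by
    refine ⟨fun x => ?_, fun b hb => ?_, fun x => ?_, hE'mod⟩
    · rw [hE'a]; exact B.smul_mem (hE.1 _) _
    · have := hE'mod b hb 1 (one_mem B) 1
      simpa [hE'1] using this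
    · obtain ⟨w, hw⟩ := hE.2.2.1 (x * k)
      refine ⟨((Real.sqrt ε⁻¹ : ℝ) : ℂ) • w, ?_⟩
      have h2 : k * (star x * x * k) = star (x * k) * (x * k) := by
        rw [star_mul, hks]; simp only [mul_assoc]
      rw [hE'a, h2, hw, star_smul, smul_mul_smul_comm]
      congr 1
      rw [RCLike.star_def, Complex.conj_ofReal, ← Complex.ofReal_mul,
        Real.mul_self_sqrt (by positivity), Complex.ofReal_inv]
  have hsq : ((Real.sqrt ε : ℝ) : ℂ) * ((Real.sqrt ε : ℝ) : ℂ) = (ε : ℂ) := by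
    rw [← Complex.ofReal_mul, Real.mul_self_sqrt hepos]
  refine hmin E' hCE n (fun i => ((Real.sqrt ε : ℝ) : ℂ) • (l i * k')) (fun x => ?_) _ ?_
  · have h1 : ∀ i, E' (x * (((Real.sqrt ε : ℝ) : ℂ) • (l i * k'))) *
        star (((Real.sqrt ε : ℝ) : ℂ) • (l i * k')) =
        k' * (E (k * x * l i) * star (l i)) := fun i => by
      have h2 : k * (x * (l i * k') * k) = k * x * l i := by
        simp only [mul_assoc, hk'k, mul_one]
      rw [mul_smul_comm, map_smul, hE'a, h2, star_smul, RCLike.star_def, Complex.conj_ofReal,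
        star_mul, hks', ← mul_assoc k', hk' _ (hE.1 (k * x * l i))]
      simp only [smul_mul_assoc, mul_smul_comm, smul_smul]
      have : ((Real.sqrt ε : ℝ) : ℂ) * (((Real.sqrt ε : ℝ) : ℂ) * (ε : ℂ)⁻¹) = 1 := by
        rw [← mul_assoc, hsq, mul_inv_cancel₀ hεC]
      rw [this, one_smul]
      simp only [mul_assoc]
    rw [Finset.sum_congr rfl fun i _ => h1 i, ← Finset.mul_sum, ← hl (k * x), ← mul_assoc, hk'k,
      one_mul]
  · have h1 : ∀ i, (((Real.sqrt ε : ℝ) : ℂ) • (l i * k')) *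
        star (((Real.sqrt ε : ℝ) : ℂ) • (l i * k')) =
        (ε : ℂ) • (l i * (k' * k') * star (l i)) := fun i => by
      rw [star_smul, RCLike.star_def, Complex.conj_ofReal, smul_mul_smul_comm, hsq, star_mul, hks']
      simp only [mul_assoc]
    rw [Finset.sum_congr rfl fun i _ => h1 i, ← Finset.smul_sum, hc, smul_smul]
    congr 1
    rw [Complex.ofReal_mul, hcr]

/-- First variation of the index at the minimal expectation along `k = exp (t • s)`: the index
functional `d ↦ ∑ i, l i * d * star (l i)` on the relative commutant is a multiple of `E`. -/
lemma index_eq_of_selfAdjoint [Nontrivial M] (hB : IsClosed (B : Set M))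
    (hMs : IsSimpleCStar (Set.univ : Set M)) (hBs : IsSimpleCStar (B : Set M))
    (hE : IsCondExp (B : Set M) E) (hl : IsRightQB E l) {r₀ : ℝ}
    (hr₀ : ∑ i, l i * star (l i) = (r₀ : ℂ) • 1)
    (hmin : ∀ E' : M →ₗ[ℂ] M, IsCondExp (B : Set M) E' → ∀ (m : ℕ) (μ : Fin m → M),
      IsRightQB E' μ → ∀ r : ℝ, (∑ i, μ i * star (μ i)) = (r : ℂ) • 1 → r₀ ≤ r)
    {s : M} (hs : s ∈ cent (B : Set M)) (hss : star s = s) :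
    ∑ i, l i * s * star (l i) = (r₀ : ℂ) • E s := by
  -- `f` reads off scalars, turning the algebra-valued index into a real function of `t`
  obtain ⟨f, -, hf1⟩ := exists_dual_vector ℂ (1 : M) (by simp)
  have hf1 : f 1 = 1 := by simpa using hf1
  have hexp : ∀ t : ℝ, ∀ x ∈ cent (B : Set M), NormedSpace.exp (t • x) ∈ cent (B : Set M) := by
    intro t x hx b hb
    have hc : Commute (t • x) b := by
      have : Commute x b := hx b hb
      exact this.smul_left t
    exact hc.exp_left
  have hns : -s ∈ cent (B : Set M) := by simpa using smul_mem_cent (-1) hs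
  set u : ℝ → M := fun t => NormedSpace.exp (t • s) with hu
  set v : ℝ → M := fun t => NormedSpace.exp (t • (-s)) with hv
  have hu0 : u 0 = 1 := by simp [hu]
  have hv0 : v 0 = 1 := by simp [hv]
  have hu' : HasDerivAt u s 0 := by
    simpa using hasDerivAt_exp_smul_const (𝕂 := ℝ) s (0 : ℝ)
  have hv' : HasDerivAt v (-s) 0 := by
    have h := hasDerivAt_exp_smul_const (𝕂 := ℝ) (-s) (0 : ℝ)
    rw [zero_smul, NormedSpace.exp_zero, one_mul] at h
    exact h
  let _ : NormedAlgebra ℚ M := NormedAlgebra.restrictScalars ℚ ℝ M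
  have huv : ∀ t, u t * v t = 1 := fun t => by
    simp only [hu, hv]
    rw [← NormedSpace.exp_add_of_commute]
    · simp
    · simp
  have hvu : ∀ t, v t * u t = 1 := fun t => by
    simp only [hu, hv]
    rw [← NormedSpace.exp_add_of_commute]
    · simp
    · simp
  have hsu : ∀ t, star (u t) = u t := fun t => by
    simp only [hu]; rw [NormedSpace.star_exp]; simp [hss]
  have hsv : ∀ t, star (v t) = v t := fun t => by
    simp only [hv]; rw [NormedSpace.star_exp]; simp [hss]
  have huu' : HasDerivAt (fun t => u t * u t) (s + s) 0 := by
    have h := hu'.mul hu'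
    rw [hu0, mul_one, one_mul] at h
    exact h
  have hvv' : HasDerivAt (fun t => v t * v t) (-s + -s) 0 := by
    have h := hv'.mul hv'
    rw [hv0, mul_one, one_mul] at h
    exact h
  set EL : M →L[ℝ] M := (E.mkContinuous 1 hE.norm_le).restrictScalars ℝ with hEL
  have hELa : ∀ x, EL x = E x := fun x => rfl
  have hEu : HasDerivAt (fun t => E (u t * u t)) (E (s + s)) 0 :=
    EL.hasFDerivAt.comp_hasDerivAt 0 huu'
  have hφ : HasDerivAt (fun t => ∑ i, l i * (v t * v t) * star (l i))
      (∑ i, l i * (-s + -s) * star (l i)) 0 :=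
    HasDerivAt.fun_sum fun i _ => (hvv'.const_mul (l i)).mul_const (star (l i))
  have hG := hφ.mul hEu
  have hfre : HasDerivAt (fun t =>
      (f ((∑ i, l i * (v t * v t) * star (l i)) * E (u t * u t))).re) _ 0 :=
    ((Complex.reCLM.comp (f.restrictScalars ℝ)).hasFDerivAt).comp_hasDerivAt 0 hG
  have hG0 : (f ((∑ i, l i * (v 0 * v 0) * star (l i)) * E (u 0 * u 0))).re = r₀ := by
    simp [hu0, hv0, hE.map_one, hr₀, hf1]
  have hlm : IsLocalMin (fun t =>
      (f ((∑ i, l i * (v t * v t) * star (l i)) * E (u t * u t))).re) 0 := by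
    refine Filter.Eventually.of_forall fun t => ?_
    simp only [hG0]
    have hut := hexp t s hs
    have hvt := hexp t (-s) hns
    obtain ⟨e, he⟩ := hE.exists_scalar hB hBs (mul_mem_cent hut hut)
    obtain ⟨c, hc⟩ := exists_scalar_index hE hl hMs (mul_mem_cent hvt hvt)
    have := minimal_inequality hE hl hmin hut hvt (hsu t) (hsv t) (huv t) (hvu t) he hc
    simp only [hu, hv]
    rw [he, hc]
    simpa [hf1, mul_comm] using this
  have hzero := hlm.hasDerivAt_eq_zero hfre
  obtain ⟨c, hc⟩ := exists_scalar_index hE hl hMs hs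
  obtain ⟨e, he⟩ := hE.exists_scalar hB hBs hs
  have hsac : star c = c := by
    have h1 : star (c • (1 : M)) = c • 1 := by
      rw [← hc, star_sum]
      refine Finset.sum_congr rfl fun i _ => ?_
      simp [hss, mul_assoc]
    rw [star_smul, star_one] at h1
    exact smul_left_injective ℂ (one_ne_zero (α := M)) h1
  have hsae : star e = e := by
    have h1 : star (e • (1 : M)) = e • 1 := by
      rw [← he, ← hE.map_star, hss]
    rw [star_smul, star_one] at h1
    exact smul_left_injective ℂ (one_ne_zero (α := M)) h1
  have hcr : ((c.re : ℝ) : ℂ) = c := Complex.conj_eq_iff_re.mp hsac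
  have her : ((e.re : ℝ) : ℂ) = e := Complex.conj_eq_iff_re.mp hsae
  have hneg : ∑ i, l i * (-s + -s) * star (l i) = -(c • (1 : M)) + -(c • 1) := by
    rw [← hc]
    simp only [mul_add, add_mul, Finset.sum_add_distrib, mul_neg, neg_mul, Finset.sum_neg_distrib]
  have hz : -c.re + -c.re + r₀ * (e.re + e.re) = 0 := by
    have hz' : (f ((∑ i, l i * (-s + -s) * star (l i)) * E (u 0 * u 0)
        + (∑ i, l i * (v 0 * v 0) * star (l i)) * E (s + s))).re = 0 := hzero
    rw [hneg] at hz'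
    simpa [hu0, hv0, hE.map_one, hr₀, he, hf1, mul_add, mul_comm] using hz'
  have : c = r₀ * e := by
    rw [← hcr, ← her]
    have : c.re = r₀ * e.re := by linarith
    rw [this]; simp
  rw [hc, he, this, smul_smul]

/-- The self-adjoint case extended to the whole relative commutant by linearity. -/
lemma index_eq [Nontrivial M] (hB : IsClosed (B : Set M))
    (hMs : IsSimpleCStar (Set.univ : Set M)) (hBs : IsSimpleCStar (B : Set M))
    (hE : IsCondExp (B : Set M) E) (hl : IsRightQB E l) {r₀ : ℝ}
    (hr₀ : ∑ i, l i * star (l i) = (r₀ : ℂ) • 1)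
    (hmin : ∀ E' : M →ₗ[ℂ] M, IsCondExp (B : Set M) E' → ∀ (m : ℕ) (μ : Fin m → M),
      IsRightQB E' μ → ∀ r : ℝ, (∑ i, μ i * star (μ i)) = (r : ℂ) • 1 → r₀ ≤ r)
    {d : M} (hd : d ∈ cent (B : Set M)) :
    ∑ i, l i * d * star (l i) = (r₀ : ℂ) • E d := by
  have key := fun {s : M} => index_eq_of_selfAdjoint (s := s) hB hMs hBs hE hl hr₀ hmin
  have h1 := key (add_mem_cent hd (star_mem_cent hd)) (by rw [star_add, star_star, add_comm])
  have h2 := key (smul_mem_cent Complex.I (sub_mem_cent hd (star_mem_cent hd)))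
    (by rw [star_smul, star_sub, star_star, RCLike.star_def, Complex.conj_I, neg_smul,
      ← smul_neg, neg_sub])
  set ψ : M →ₗ[ℂ] M :=
    (∑ i, LinearMap.mulRight ℂ (star (l i)) ∘ₗ LinearMap.mulLeft ℂ (l i)) - (r₀ : ℂ) • E with hψ
  have hψa : ∀ x, ψ x = ∑ i, l i * x * star (l i) - (r₀ : ℂ) • E x := fun x => by
    simp [hψ]
  have g1 : ψ (d + star d) = 0 := by rw [hψa, h1, sub_self]
  have g2 : ψ (Complex.I • (d - star d)) = 0 := by rw [hψa, h2, sub_self]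
  rw [map_smul, smul_eq_zero_iff_right Complex.I_ne_zero, map_sub] at g2
  rw [map_add] at g1
  have g3 : (2 : ℂ) • ψ d = 0 := by
    rw [two_smul]
    calc ψ d + ψ d = (ψ d + ψ (star d)) + (ψ d - ψ (star d)) := by abel
      _ = 0 := by rw [g1, g2, add_zero]
  rw [smul_eq_zero_iff_right two_ne_zero, hψa, sub_eq_zero] at g3
  exact g3

/-- The minimal conditional expectation is centralized by the relative commutant. The map
`σ d = ∑ i, l i * E (d * star (l i))` is the modular automorphism, `E (d * x) = E (x * σ d)`. The
index functional has modular automorphism `σ⁻¹` but is proportional to `E`, so `σ² = 1`; since `σ`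
is positive for the inner product `E (star x * y)`, it follows that `σ = 1`. -/
lemma minimal_central [Nontrivial M] (hB : IsClosed (B : Set M))
    (hMs : IsSimpleCStar (Set.univ : Set M)) (hBs : IsSimpleCStar (B : Set M))
    (hE : IsCondExp (B : Set M) E) (hl : IsRightQB E l) {r₀ : ℝ}
    (hr₀ : ∑ i, l i * star (l i) = (r₀ : ℂ) • 1)
    (hmin : ∀ E' : M →ₗ[ℂ] M, IsCondExp (B : Set M) E' → ∀ (m : ℕ) (μ : Fin m → M),
      IsRightQB E' μ → ∀ r : ℝ, (∑ i, μ i * star (μ i)) = (r : ℂ) • 1 → r₀ ≤ r)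
    {d : M} (hd : d ∈ cent (B : Set M)) (x : M) : E (d * x) = E (x * d) := by
  have hr₀ne : (r₀ : ℂ) ≠ 0 := by
    intro h0
    rw [h0, zero_smul, Finset.sum_eq_zero_iff_of_nonneg fun i _ => mul_star_self_nonneg _] at hr₀
    have h1 := hl 1
    have : ∀ i, star (l i) = 0 := fun i => by
      have := hr₀ i (Finset.mem_univ i)
      rw [CStarRing.mul_star_self_eq_zero_iff] at this
      rw [this, star_zero]
    simp [this] at h1
  set σ : M → M := fun d => ∑ i, l i * E (d * star (l i)) with hσ
  have hσE : ∀ d ∈ cent (B : Set M), ∀ x, E (x * σ d) = E (d * x) := by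
    intro d hd x
    have : ∀ i, E (x * (l i * E (d * star (l i)))) = E (d * (E (x * l i) * star (l i))) := by
      intro i
      rw [← mul_assoc, hE.map_mul_right (hE.1 _), ← mul_assoc d, hd _ (hE.1 _), mul_assoc,
        hE.map_mul_left (hE.1 _)]
    rw [hσ]
    simp only [Finset.mul_sum, map_sum, this]
    rw [← map_sum, ← Finset.mul_sum, ← hl x]
  have hσD : ∀ d ∈ cent (B : Set M), σ d ∈ cent (B : Set M) := by
    intro d hd b hb
    rw [← sub_eq_zero]
    refine hE.nondegenerate hl fun x => ?_
    rw [mul_sub, map_sub, ← mul_assoc, ← mul_assoc, hE.map_mul_right hb, hσE d hd, hσE d hd,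
      ← mul_assoc, hE.map_mul_right hb, sub_self]
  have hφ : ∀ x ∈ cent (B : Set M), ∀ d ∈ cent (B : Set M), E (x * d) = E (σ d * x) := by
    intro x hx d hd
    have h1 := index_eq hB hMs hBs hE hl hr₀ hmin (mul_mem_cent hx hd)
    have h2 := index_eq hB hMs hBs hE hl hr₀ hmin (mul_mem_cent (hσD d hd) hx)
    have h3 : ∑ i, l i * (x * d) * star (l i) = ∑ i, l i * (σ d * x) * star (l i) := by
      have h4 : ∀ i, l i * (x * d) * star (l i)
          = ∑ j, l i * E (star (l i) * (l j * σ d)) * x * star (l j) := fun i => by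
        have : l i * (x * d) * star (l i) = l i * (x * (d * star (l i))) := by
          simp only [mul_assoc]
        rw [this]
        conv_lhs => rw [hl (d * star (l i))]
        rw [Finset.mul_sum, Finset.mul_sum]
        refine Finset.sum_congr rfl fun j _ => ?_
        rw [← mul_assoc x, hx _ (hE.1 _), ← mul_assoc (star (l i)), hσE d hd]
        simp only [mul_assoc]
      rw [Finset.sum_congr rfl fun i _ => h4 i, Finset.sum_comm]
      refine Finset.sum_congr rfl fun j _ => ?_
      rw [← Finset.sum_mul, ← Finset.sum_mul, ← hl.expand_left hE (l j * σ d)]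
      simp only [mul_assoc]
    rw [h1, h2] at h3
    exact smul_right_injective M hr₀ne h3
  -- `σ (σ d) = d`, from the non-degeneracy of `E` on the relative commutant
  have hσσ : σ (σ d) = d := by
    have hD := hσD _ (hσD d hd)
    have hy := sub_mem_cent hD hd
    rw [← sub_eq_zero]
    refine hE.faithful hl ?_
    have hy' := star_mem_cent hy
    rw [mul_sub, map_sub, hσE _ (hσD d hd), hφ _ hy' d hd, sub_self]
  have hσsub : ∀ a b, σ (a - b) = σ a - σ b := fun a b => by
    simp [hσ, sub_mul, mul_sub, Finset.sum_sub_distrib]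
  set y := σ d - d with hy
  have hyD : y ∈ cent (B : Set M) := sub_mem_cent (hσD d hd) hd
  have hσy : σ y = -y := by rw [hy, hσsub, hσσ]; abel
  -- `σ y = -y` gives `E (y * star y) = -E (star y * y)`, with both sides of opposite sign
  have h1 := hσE y hyD (star y)
  rw [hσy, mul_neg, map_neg] at h1
  have h2 : E (star y * y) = 0 := by
    refine le_antisymm ?_ (hE.nonneg (star_mul_self_nonneg y))
    have := hE.nonneg (mul_star_self_nonneg y)
    rw [← h1] at this
    exact neg_nonneg.mp this
  have h3 : σ d = d := sub_eq_zero.mp (hE.faithful hl h2)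
  rw [← hσE d hd, h3]

end Trace

/-! ### Orthonormal bases of the relative commutant -/

section Basis

variable {M : Type*} [CStarAlgebra M] [PartialOrder M] [StarOrderedRing M]
  {B : StarSubalgebra ℂ M} {E : M →ₗ[ℂ] M} {n : ℕ} {l : Fin n → M}

/-- `d` is a finite family in the relative commutant of `B`, orthonormal for the inner product
`E (star x * y)`. -/
def IsOrthoFamily (B : StarSubalgebra ℂ M) (E : M →ₗ[ℂ] M) {m : ℕ} (d : Fin m → M) : Prop :=
  (∀ j, d j ∈ cent (B : Set M)) ∧ ∀ i j, E (star (d i) * d j) = if i = j then 1 else 0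

/-- A Bessel inequality: if `ν i` is the orthogonal projection of `l i` to the span of `d`, then
`0 ≤ ∑ i, (l i - ν i) * star (l i - ν i) = ∑ i, l i * star (l i) - ∑ j, d j * star (d j)`. -/
lemma ortho_card_le [Nontrivial M] (hE : IsCondExp (B : Set M) E) (hl : IsRightQB E l) {r₀ : ℝ}
    (hr₀ : ∑ i, l i * star (l i) = (r₀ : ℂ) • 1)
    (hcen : ∀ d ∈ cent (B : Set M), ∀ x, E (d * x) = E (x * d))
    {m : ℕ} {d : Fin m → M} (hd : IsOrthoFamily B E d) : (m : ℝ) ≤ r₀ := by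
  obtain ⟨hdD, hort⟩ := hd
  set ν : Fin n → M := fun i => ∑ j, d j * E (star (d j) * l i) with hν
  have h1 : ∑ i, ν i * star (l i) = ∑ j, d j * star (d j) := by
    simp only [hν, Finset.sum_mul]
    rw [Finset.sum_comm]
    refine Finset.sum_congr rfl fun j _ => ?_
    simp only [mul_assoc]
    rw [← Finset.mul_sum, ← hl (star (d j))]
  have h1' : ∑ i, l i * star (ν i) = ∑ j, d j * star (d j) := by
    have := congrArg star h1
    simpa [star_sum] using this
  have h2 : ∑ i, ν i * star (ν i) = ∑ j, d j * star (d j) := by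
    have e1 : ∀ i, ν i * star (ν i)
        = ∑ k, ν i * (E (star (l i) * d k) * star (d k)) := fun i => by
      conv_lhs => rw [hν]
      simp only [star_sum, Finset.mul_sum]
      refine Finset.sum_congr rfl fun k _ => ?_
      rw [star_mul, ← hE.map_star, star_mul, star_star]
    rw [Finset.sum_congr rfl fun i _ => e1 i, Finset.sum_comm]
    refine Finset.sum_congr rfl fun k _ => ?_
    simp only [← mul_assoc]
    rw [← Finset.sum_mul]
    congr 1
    have e2 : ∀ i, ν i * E (star (l i) * d k)
        = ∑ j, d j * E (star (d j) * (l i * E (star (l i) * d k))) := fun i => by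
      simp only [hν, Finset.sum_mul]
      refine Finset.sum_congr rfl fun j _ => ?_
      rw [← mul_assoc (star (d j)), hE.map_mul_right (hE.1 _), mul_assoc]
    rw [Finset.sum_congr rfl fun i _ => e2 i, Finset.sum_comm]
    simp only [← Finset.mul_sum, ← map_sum]
    rw [← hl.expand_left hE (d k)]
    simp [hort]
  have h3 : ∑ i, (l i - ν i) * star (l i - ν i)
      = (r₀ : ℂ) • 1 - ∑ j, d j * star (d j) := by
    simp only [star_sub, mul_sub, sub_mul, Finset.sum_sub_distrib, h1, h1', h2, hr₀]
    abel
  have h4 : 0 ≤ E (∑ i, (l i - ν i) * star (l i - ν i)) :=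
    hE.nonneg (Finset.sum_nonneg fun i _ => mul_star_self_nonneg _)
  have h5 : E (∑ j, d j * star (d j)) = ((m : ℝ) : ℂ) • (1 : M) := by
    rw [map_sum]
    have : ∀ j, E (d j * star (d j)) = 1 := fun j => by
      rw [hcen _ (hdD j), hort]; simp
    simp only [this, Finset.sum_const, Finset.card_univ, Fintype.card_fin]
    simp [← Nat.cast_smul_eq_nsmul ℂ]
  rw [h3, map_sub, map_smul, hE.map_one, h5, ← sub_smul, ← Complex.ofReal_sub] at h4
  have := (smul_one_nonneg h4).2
  simpa using this

/-- One step of the Gram–Schmidt process. -/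
lemma ortho_extend [Nontrivial M] (hE : IsCondExp (B : Set M) E) (hl : IsRightQB E l)
    (hsc : ∀ d ∈ cent (B : Set M), ∃ c : ℂ, E d = c • (1 : M))
    {m : ℕ} {d : Fin m → M} (hd : IsOrthoFamily B E d)
    {y : M} (hy : y ∈ cent (B : Set M)) (hne : y ≠ ∑ j, d j * E (star (d j) * y)) :
    ∃ d' : Fin (m + 1) → M, IsOrthoFamily B E d' := by
  obtain ⟨hdD, hort⟩ := hd
  set w : M := y - ∑ j, d j * E (star (d j) * y) with hw
  have hwne : w ≠ 0 := sub_ne_zero.mpr hne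
  have hwD : w ∈ cent (B : Set M) := by
    refine sub_mem_cent hy (sum_mem_cent _ fun j _ => ?_)
    obtain ⟨c, hc⟩ := hsc _ (mul_mem_cent (star_mem_cent (hdD j)) hy)
    rw [hc, mul_smul_comm, mul_one]
    exact smul_mem_cent c (hdD j)
  have hwo : ∀ i, E (star (d i) * w) = 0 := fun i => by
    have : ∀ j, E (star (d i) * (d j * E (star (d j) * y)))
        = if i = j then E (star (d j) * y) else 0 := fun j => by
      rw [← mul_assoc, hE.map_mul_right (hE.1 _), hort]
      split <;> simp
    rw [hw, mul_sub, map_sub, Finset.mul_sum, map_sum]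
    simp [this]
  have hwo' : ∀ i, E (star w * d i) = 0 := fun i => by
    have := congrArg star (hwo i)
    rwa [← hE.map_star, star_mul, star_star, star_zero] at this
  obtain ⟨e, he⟩ := hsc _ (mul_mem_cent (star_mem_cent hwD) hwD)
  obtain ⟨her, hepos⟩ := smul_one_nonneg (he ▸ hE.nonneg (star_mul_self_nonneg w))
  have hene : e.re ≠ 0 := by
    intro h0
    refine hwne (hE.faithful hl ?_)
    rw [he, ← her, h0]; simp
  set q : ℂ := (((Real.sqrt e.re)⁻¹ : ℝ) : ℂ) with hq
  have hqq : star q * q * e = 1 := by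
    have h : ((Real.sqrt e.re)⁻¹ * (Real.sqrt e.re)⁻¹ * e.re : ℝ) = 1 := by
      rw [← mul_inv, Real.mul_self_sqrt hepos, inv_mul_cancel₀ hene]
    have h' := congrArg (fun r : ℝ => (r : ℂ)) h
    simp only [Complex.ofReal_mul, her, Complex.ofReal_one] at h'
    rw [hq, RCLike.star_def, Complex.conj_ofReal]
    exact h'
  refine ⟨Fin.snoc d (q • w), fun j => ?_, fun i j => ?_⟩
  · refine Fin.lastCases ?_ (fun j => ?_) j
    · simpa using smul_mem_cent q hwD
    · simpa using hdD j
  · refine Fin.lastCases ?_ (fun i => ?_) i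
    · refine Fin.lastCases ?_ (fun j => ?_) j
      · simp only [Fin.snoc_last, star_smul, smul_mul_smul_comm, map_smul, he, smul_smul, hqq]
        simp
      · have hlt : Fin.last m ≠ j.castSucc := (Fin.castSucc_lt_last j).ne'
        simp [hwo', hlt]
    · refine Fin.lastCases ?_ (fun j => ?_) j
      · have hlt : i.castSucc ≠ Fin.last m := (Fin.castSucc_lt_last i).ne
        simp [hwo, hlt]
      · simp [hort]

/-- The relative commutant has a finite orthonormal basis, since the Bessel inequality bounds the
size of orthonormal families. -/
lemma exists_ortho_basis [Nontrivial M] (hE : IsCondExp (B : Set M) E) (hl : IsRightQB E l)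
    {r₀ : ℝ} (hr₀ : ∑ i, l i * star (l i) = (r₀ : ℂ) • 1)
    (hsc : ∀ d ∈ cent (B : Set M), ∃ c : ℂ, E d = c • (1 : M))
    (hcen : ∀ d ∈ cent (B : Set M), ∀ x, E (d * x) = E (x * d)) :
    ∃ (m : ℕ) (d : Fin m → M), IsOrthoFamily B E d ∧
      ∀ y ∈ cent (B : Set M), y = ∑ j, d j * E (star (d j) * y) := by
  by_contra! hcon
  have hall : ∀ m : ℕ, ∃ d : Fin m → M, IsOrthoFamily B E d := by
    intro m
    induction m with
    | zero => exact ⟨Fin.elim0, fun j => j.elim0, fun j => j.elim0⟩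
    | succ m ih =>
      obtain ⟨d, hd⟩ := ih
      obtain ⟨y, hy, hne⟩ := hcon m d hd
      exact ortho_extend hE hl hsc hd hy hne
  obtain ⟨m, hm⟩ := exists_nat_gt r₀
  obtain ⟨d, hd⟩ := hall m
  exact absurd (ortho_card_le hE hl hr₀ hcen hd) (not_le.mpr hm)

end Basis

/-! ### The orthogonal projection attached to an orthonormal basis -/

section Projection

variable {M : Type*} [CStarAlgebra M]
  {B : StarSubalgebra ℂ M} {E : M →ₗ[ℂ] M} {m : ℕ} {d : Fin m → M}

/-- The orthogonal projection `x ↦ ∑ j, E (x * d j) * star (d j)` onto the `B`-module spanned by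
the family `star (d j)`. -/
noncomputable def proj (E : M →ₗ[ℂ] M) (d : Fin m → M) : M →ₗ[ℂ] M :=
  ∑ j, LinearMap.mulRight ℂ (star (d j)) ∘ₗ E ∘ₗ LinearMap.mulRight ℂ (d j)

lemma proj_apply (x : M) : proj E d x = ∑ j, E (x * d j) * star (d j) := by
  simp [proj]

lemma subset_genC {x : M} (hx : x ∈ (B : Set M) ∪ cent (B : Set M)) : x ∈ genC (B : Set M) :=
  StarSubalgebra.le_topologicalClosure _ (StarAlgebra.subset_adjoin ℂ _ hx)

/-- `∑ j, star (d j) * d j` is central in the commutant of `B`: the coordinates of `e * star (d j)`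
and of `d j * e` in the orthonormal basis coincide. -/
lemma sum_central (hE : IsCondExp (B : Set M) E)
    (hsc : ∀ d ∈ cent (B : Set M), ∃ c : ℂ, E d = c • (1 : M))
    (hcen : ∀ d ∈ cent (B : Set M), ∀ x, E (d * x) = E (x * d))
    (hdD : ∀ j, d j ∈ cent (B : Set M))
    (hbas : ∀ y ∈ cent (B : Set M), y = ∑ j, d j * E (star (d j) * y))
    {e : M} (he : e ∈ cent (B : Set M)) :
    e * ∑ j, star (d j) * d j = (∑ j, star (d j) * d j) * e := by
  have h1 : ∀ j, e * star (d j) = ∑ k, star (d k) * E (star (d j) * (d k * e)) := fun j => by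
    have := congrArg star (hbas _ (star_mem_cent (mul_mem_cent he (star_mem_cent (hdD j)))))
    rw [star_star, star_sum] at this
    refine this.trans (Finset.sum_congr rfl fun k _ => ?_)
    rw [star_mul, ← hE.map_star, star_mul, star_star, star_star, mul_assoc, hcen e he, mul_assoc]
    obtain ⟨c, hc⟩ := hsc _ (mul_mem_cent (star_mem_cent (hdD j)) (mul_mem_cent (hdD k) he))
    simp [hc]
  have h2 : ∀ j, e * (star (d j) * d j)
      = ∑ k, star (d k) * (d j * E (star (d j) * (d k * e))) := fun j => by
    rw [← mul_assoc, h1 j, Finset.sum_mul]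
    refine Finset.sum_congr rfl fun k _ => ?_
    obtain ⟨c, hc⟩ := hsc _ (mul_mem_cent (star_mem_cent (hdD j)) (mul_mem_cent (hdD k) he))
    simp [hc]
  rw [Finset.mul_sum, Finset.sum_congr rfl fun j _ => h2 j, Finset.sum_comm, Finset.sum_mul]
  refine Finset.sum_congr rfl fun k _ => ?_
  rw [← Finset.mul_sum, ← hbas _ (mul_mem_cent (hdD k) he), mul_assoc]

end Projection

/-! ### The conditional expectation onto the generated algebra -/

section Expectation

variable {M : Type*} [CStarAlgebra M] [PartialOrder M] [StarOrderedRing M]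
  {B : StarSubalgebra ℂ M} {E : M →ₗ[ℂ] M} {n : ℕ} {l : Fin n → M} {m : ℕ} {d : Fin m → M}

/-- `proj E d` is a bimodule map over the C*-algebra generated by `B` and its commutant; it is
enough to check this on the generators. -/
lemma proj_bimodule (hE : IsCondExp (B : Set M) E)
    (hcen : ∀ d ∈ cent (B : Set M), ∀ x, E (d * x) = E (x * d))
    (hdD : ∀ j, d j ∈ cent (B : Set M))
    (hbas : ∀ y ∈ cent (B : Set M), y = ∑ j, d j * E (star (d j) * y))
    {c : M} (hc : c ∈ genC (B : Set M)) :
    ∀ x, proj E d (c * x) = c * proj E d x ∧ proj E d (x * c) = proj E d x * c := by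
  have hbas' : ∀ y ∈ cent (B : Set M), y = ∑ j, E (y * d j) * star (d j) := by
    intro y hy
    have := congrArg star (hbas _ (star_mem_cent hy))
    rw [star_star, star_sum] at this
    refine this.trans (Finset.sum_congr rfl fun j _ => ?_)
    rw [star_mul, ← hE.map_star, star_mul, star_star, star_star]
  have hEx : ∀ x, ∀ w ∈ cent (B : Set M), E (x * w) = ∑ k, E (x * d k) * E (star (d k) * w) := by
    intro x w hw
    conv_lhs => rw [hbas w hw]
    rw [Finset.mul_sum, map_sum]
    refine Finset.sum_congr rfl fun k _ => ?_
    rw [← mul_assoc, hE.map_mul_right (hE.1 _)]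
  have hgen : ∀ c ∈ (B : Set M) ∪ cent (B : Set M),
      ∀ x, proj E d (c * x) = c * proj E d x ∧ proj E d (x * c) = proj E d x * c := by
    rintro c (hc | hc) x
    · constructor
      · rw [proj_apply, proj_apply, Finset.mul_sum]
        refine Finset.sum_congr rfl fun j _ => ?_
        rw [mul_assoc c, hE.map_mul_left hc, mul_assoc]
      · rw [proj_apply, proj_apply, Finset.sum_mul]
        refine Finset.sum_congr rfl fun j _ => ?_
        rw [mul_assoc x, ← hdD j c hc, ← mul_assoc, hE.map_mul_right hc, mul_assoc, mul_assoc,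
          star_mem_cent (hdD j) c hc]
    · constructor
      · rw [proj_apply, proj_apply, Finset.mul_sum]
        have h1 : ∀ j, E (c * x * d j) * star (d j)
            = ∑ k, E (x * d k) * (E (c * star (d k) * d j) * star (d j)) := fun j => by
          rw [mul_assoc c, hcen c hc, mul_assoc x, hEx x _ (mul_mem_cent (hdD j) hc),
            Finset.sum_mul]
          refine Finset.sum_congr rfl fun k _ => ?_
          rw [← mul_assoc (star (d k)), ← hcen c hc, mul_assoc, mul_assoc c]
        rw [Finset.sum_congr rfl fun j _ => h1 j, Finset.sum_comm]
        refine Finset.sum_congr rfl fun k _ => ?_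
        rw [← Finset.mul_sum, ← hbas' _ (mul_mem_cent hc (star_mem_cent (hdD k))), ← mul_assoc,
          ← hc _ (hE.1 _), mul_assoc]
      · rw [proj_apply, proj_apply, Finset.sum_mul]
        have h1 : ∀ j, E (x * c * d j) * star (d j)
            = ∑ k, E (x * d k) * (E (star (d k) * c * d j) * star (d j)) := fun j => by
          rw [mul_assoc x, hEx x _ (mul_mem_cent hc (hdD j)), Finset.sum_mul]
          refine Finset.sum_congr rfl fun k _ => ?_
          rw [← mul_assoc (star (d k)), mul_assoc]
        rw [Finset.sum_congr rfl fun j _ => h1 j, Finset.sum_comm]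
        refine Finset.sum_congr rfl fun k _ => ?_
        rw [← Finset.mul_sum, ← hbas' _ (mul_mem_cent (star_mem_cent (hdD k)) hc), mul_assoc]
  have hcont : Continuous (proj E d) := by
    have : (proj E d : M → M) = fun x => ∑ j, E (x * d j) * star (d j) :=
      funext fun x => proj_apply x
    rw [this]
    have := hE.continuous
    fun_prop
  have hadj : ∀ c ∈ StarAlgebra.adjoin ℂ ((B : Set M) ∪ cent (B : Set M)),
      ∀ x, proj E d (c * x) = c * proj E d x ∧ proj E d (x * c) = proj E d x * c := by
    intro c hc
    have hc' : c ∈ Algebra.adjoin ℂ (((B : Set M) ∪ cent (B : Set M)) ∪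
      star ((B : Set M) ∪ cent (B : Set M))) := hc
    induction hc' using Algebra.adjoin_induction with
    | mem y hy =>
      rcases hy with hy | hy
      · exact hgen y hy
      · -- the generating set is already `*`-closed
        refine hgen y ?_
        rcases hy with hy | hy
        · left
          have := star_mem (s := B) hy
          rwa [star_star] at this
        · right
          have := star_mem_cent (B := B) hy
          rwa [star_star] at this
    | algebraMap r =>
      intro x
      simp [Algebra.algebraMap_eq_smul_one]
    | add a b ha hb iha ihb =>
      intro x
      simp only [add_mul, mul_add, map_add, (iha ha x).1, (iha ha x).2, (ihb hb x).1,
        (ihb hb x).2, and_self]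
    | mul a b ha hb iha ihb =>
      intro x
      rw [mul_assoc a b x, (iha ha _).1, (ihb hb _).1, ← mul_assoc x a b, (ihb hb _).2,
        (iha ha _).2]
      simp only [mul_assoc, and_self]
  intro x
  have hclosed : IsClosed {c : M | proj E d (c * x) = c * proj E d x ∧
      proj E d (x * c) = proj E d x * c} := by
    apply IsClosed.and
    · exact isClosed_eq (by fun_prop) (by fun_prop)
    · exact isClosed_eq (by fun_prop) (by fun_prop)
  exact closure_minimal (fun c hc => hadj c hc x) hclosed hc

/-- A self-adjoint element of a C*-subalgebra `C` is positive as soon as its compressions by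
elements of `C` have positive image under a faithful expectation: the negative part `a⁻` lies in
`C`, and compressing by it gives `-(a⁻)³`. -/
lemma nonneg_of_compressions (hE : IsCondExp (B : Set M) E) (hl : IsRightQB E l)
    (C : StarSubalgebra ℂ M) (hC : IsClosed (C : Set M)) {a : M} (ha : a ∈ C)
    (hsa : IsSelfAdjoint a) (hpos : ∀ c ∈ C, 0 ≤ E (star c * a * c)) : 0 ≤ a := by
  have hmem : a⁻ ∈ C := by
    rw [CFC.negPart_def]
    have := hC
    exact cfcₙ_mem (𝕜' := ℂ) (s := C) _ ha
  have hneg : 0 ≤ a⁻ := CFC.negPart_nonneg a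
  have hsn : star a⁻ = a⁻ := (IsSelfAdjoint.of_nonneg hneg)
  have h1 := hpos _ hmem
  have h2 : star a⁻ * a * a⁻ = -(a⁻ * a⁻ * a⁻) := by
    have e : a⁻ * a = -(a⁻ * a⁻) := by
      calc a⁻ * a = a⁻ * (a⁺ - a⁻) := by rw [CFC.posPart_sub_negPart a hsa]
        _ = _ := by rw [mul_sub, CFC.negPart_mul_posPart, zero_sub]
    rw [hsn, e, neg_mul]
  rw [h2, map_neg] at h1
  have h3 : 0 ≤ a⁻ * a⁻ * a⁻ := by
    have := star_left_conjugate_nonneg hneg a⁻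
    rwa [hsn] at this
  have h4 : a⁻ * a⁻ * a⁻ = 0 :=
    hE.faithful_of_nonneg hl h3 (le_antisymm (neg_nonneg.mp h1) (hE.nonneg h3))
  have h5 : a⁻ * a⁻ = 0 := by
    rw [← CStarRing.star_mul_self_eq_zero_iff, star_mul, hsn, ← mul_assoc, h4, zero_mul]
  have h6 : a⁻ = 0 := by
    rw [← CStarRing.star_mul_self_eq_zero_iff, hsn, h5]
  have h7 := CFC.posPart_sub_negPart a hsa
  rw [h6, sub_zero] at h7
  rw [← h7]
  exact CFC.posPart_nonneg a

/-- `z = ∑ j, star (d j) * d j` dominates `1`: writing `t j = E (star (d j))` for the coordinates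
of `1`, one has `z - 1 = ∑ j, star (d j - star (t j)) * (d j - star (t j))`. -/
lemma one_le_sum (hE : IsCondExp (B : Set M) E)
    (hsc : ∀ d ∈ cent (B : Set M), ∃ c : ℂ, E d = c • (1 : M))
    (hdD : ∀ j, d j ∈ cent (B : Set M))
    (hbas : ∀ y ∈ cent (B : Set M), y = ∑ j, d j * E (star (d j) * y)) :
    1 ≤ ∑ j, star (d j) * d j := by
  have h1 : ∑ j, d j * E (star (d j)) = 1 := by
    simpa using (hbas 1 one_mem_cent).symm
  have h2 : ∑ j, star (d j) * E (d j) = 1 := by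
    have := congrArg star h1
    rw [star_sum, star_one] at this
    rw [← this]
    refine Finset.sum_congr rfl fun j _ => ?_
    rw [star_mul, ← hE.map_star, star_star]
    obtain ⟨c, hc⟩ := hsc _ (hdD j)
    simp [hc]
  have h3 : ∑ j, E (d j) * E (star (d j)) = 1 := by
    have := congrArg E h1
    rw [map_sum, hE.map_one] at this
    rw [← this]
    exact Finset.sum_congr rfl fun j _ => (hE.map_mul_right (hE.1 _) _).symm
  have h4 : ∑ j, star (d j - E (d j)) * (d j - E (d j)) = ∑ j, star (d j) * d j - 1 := by
    have : ∀ j, star (d j - E (d j)) * (d j - E (d j))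
        = star (d j) * d j - star (d j) * E (d j) - d j * E (star (d j))
          + E (d j) * E (star (d j)) := fun j => by
      rw [star_sub, ← hE.map_star]
      obtain ⟨c, hc⟩ := hsc _ (star_mem_cent (hdD j))
      rw [hc]
      simp only [mul_sub, sub_mul, smul_mul_assoc, one_mul, mul_smul_comm, mul_one]
      abel
    simp only [this, Finset.sum_add_distrib, Finset.sum_sub_distrib, h1, h2, h3]
    abel
  have h5 : 0 ≤ ∑ j, star (d j - E (d j)) * (d j - E (d j)) :=
    Finset.sum_nonneg fun j _ => star_mul_self_nonneg _
  rw [h4] at h5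
  exact sub_nonneg.mp h5

/-- `proj E d` has the quasi-basis `l i * z ^ (-1/2)`, where `z = ∑ j, star (d j) * d j`. -/
lemma proj_quasiBasis (hE : IsCondExp (B : Set M) E) (hl : IsRightQB E l)
    (hsc : ∀ d ∈ cent (B : Set M), ∃ c : ℂ, E d = c • (1 : M))
    (hcen : ∀ d ∈ cent (B : Set M), ∀ x, E (d * x) = E (x * d))
    (hdD : ∀ j, d j ∈ cent (B : Set M))
    (hbas : ∀ y ∈ cent (B : Set M), y = ∑ j, d j * E (star (d j) * y)) :
    ∃ (k : ℕ) (l' : Fin k → M), IsRightQB (proj E d) l' := by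
  set z : M := ∑ j, star (d j) * d j with hz
  have hz1 : 1 ≤ z := one_le_sum hE hsc hdD hbas
  have hz0 : 0 ≤ z := zero_le_one.trans hz1
  have hzu : IsUnit z := CStarAlgebra.isUnit_of_le 1 hz1 isStrictlyPositive_one
  have hzD : z ∈ cent (B : Set M) :=
    sum_mem_cent _ fun j _ => mul_mem_cent (star_mem_cent (hdD j)) (hdD j)
  set g : M := z ^ (-(1 / 2) : ℝ) with hg
  have hgcomm : ∀ x, z * x = x * z → g * x = x * g := fun x hx => by
    have : Commute z x := hx
    exact this.cfc_nnreal _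
  have hgD : g ∈ cent (B : Set M) := fun b hb => hgcomm b (hzD b hb)
  have hgd : ∀ j, g * star (d j) = star (d j) * g := fun j =>
    hgcomm _ (sum_central hE hsc hcen hdD hbas (star_mem_cent (hdD j))).symm
  have hgs : star g = g := (IsSelfAdjoint.of_nonneg CFC.rpow_nonneg)
  have hggz : g * g * z = 1 := by
    conv_lhs => rw [← CFC.rpow_one z hz0, hg]
    rw [CFC.rpow_one z hz0, ← CFC.rpow_add hzu]
    nth_rewrite 2 [← CFC.rpow_one z hz0]
    rw [← CFC.rpow_add hzu, ← CFC.rpow_zero z hz0]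
    norm_num
  refine ⟨n, fun i => l i * g, fun x => ?_⟩
  have h1 : ∀ i, proj E d (x * (l i * g)) * star (l i * g)
      = ∑ j, g * star (d j) * (E (g * d j * x * l i) * star (l i)) := fun i => by
    rw [proj_apply, Finset.sum_mul]
    refine Finset.sum_congr rfl fun j _ => ?_
    have e1 : x * (l i * g) * d j = x * l i * (g * d j) := by simp only [mul_assoc]
    have e2 := mul_mem_cent (star_mem_cent (hdD j)) hgD _ (hE.1 (g * d j * x * l i))
    rw [e1, ← hcen _ (mul_mem_cent hgD (hdD j)), ← mul_assoc (g * d j), star_mul, hgs, hgd,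
      ← mul_assoc (star (d j) * g), e2]
    simp only [mul_assoc]
  rw [Finset.sum_congr rfl fun i _ => h1 i, Finset.sum_comm]
  have h2 : ∀ j, ∑ i, g * star (d j) * (E (g * d j * x * l i) * star (l i))
      = g * g * (star (d j) * d j) * x := fun j => by
    rw [← Finset.mul_sum, ← hl (g * d j * x)]
    have : g * star (d j) * (g * d j * x) = g * (star (d j) * g) * d j * x := by
      simp only [mul_assoc]
    rw [this, ← hgd j]
    simp only [mul_assoc]
  rw [Finset.sum_congr rfl fun j _ => h2 j, ← Finset.sum_mul, ← Finset.mul_sum, ← hz, hggz,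
    one_mul]

/-- `proj E d` is a conditional expectation onto `genC B` through which `E` factors. -/
lemma proj_isCondExp (hE : IsCondExp (B : Set M) E) (hl : IsRightQB E l)
    (hcen : ∀ d ∈ cent (B : Set M), ∀ x, E (d * x) = E (x * d))
    (hdD : ∀ j, d j ∈ cent (B : Set M))
    (hbas : ∀ y ∈ cent (B : Set M), y = ∑ j, d j * E (star (d j) * y)) :
    IsCondExp (genC (B : Set M) : Set M) (proj E d) ∧ ∀ x, E (proj E d x) = E x := by
  have hbi := fun {c : M} (hc : c ∈ genC (B : Set M)) => proj_bimodule hE hcen hdD hbas hc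
  have hEF : ∀ x, E (proj E d x) = E x := fun x => by
    have h1 : ∀ j, E (E (x * d j) * star (d j)) = E (x * (d j * E (star (d j) * 1))) := fun j => by
      rw [hE.map_mul_left (hE.1 _), ← mul_assoc x, hE.map_mul_right (hE.1 _), mul_one]
    rw [proj_apply, map_sum, Finset.sum_congr rfl fun j _ => h1 j, ← map_sum, ← Finset.mul_sum,
      ← hbas 1 one_mem_cent, mul_one]
  have hmem : ∀ x, proj E d x ∈ genC (B : Set M) := fun x => by
    rw [proj_apply]
    exact sum_mem fun j _ => mul_mem (subset_genC (Or.inl (hE.1 _)))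
      (subset_genC (Or.inr (star_mem_cent (hdD j))))
  have hF1 : proj E d 1 = 1 := by
    have := congrArg star (hbas 1 one_mem_cent)
    rw [star_one, star_sum] at this
    rw [proj_apply]
    refine (Finset.sum_congr rfl fun j _ => ?_).trans this.symm
    rw [star_mul, ← hE.map_star, star_mul, star_star, star_one]
  have hFstar : ∀ x, proj E d (star x) = star (proj E d x) := fun x => by
    rw [← sub_eq_zero]
    set y := proj E d (star x) - star (proj E d x) with hy
    have hyC : y ∈ genC (B : Set M) := sub_mem (hmem _) (star_mem (hmem _))
    refine hE.faithful hl ?_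
    have e1 : star y * proj E d (star x) = proj E d (star y * star x) :=
      ((hbi (star_mem hyC) _).1).symm
    have e2 : star y * star (proj E d x) = star (proj E d (x * y)) := by
      rw [(hbi hyC x).2, star_mul]
    conv_lhs => rw [hy]
    rw [← hy, mul_sub, e1, e2, map_sub, hE.map_star, hEF, hEF, ← hE.map_star, star_mul, sub_self]
  have hCcl : IsClosed (genC (B : Set M) : Set M) :=
    StarSubalgebra.isClosed_topologicalClosure _
  refine ⟨⟨hmem, fun c hc => ?_, fun x => ?_, fun c₁ h₁ c₂ h₂ x => ?_⟩, hEF⟩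
  · have := (hbi hc 1).1
    rwa [mul_one, hF1, mul_one] at this
  · apply CStarAlgebra.nonneg_iff_eq_star_mul_self.mp
    refine nonneg_of_compressions hE hl _ hCcl (hmem _) ?_ fun c hc => ?_
    · rw [IsSelfAdjoint, ← hFstar, star_mul, star_star]
    · rw [← (hbi (star_mem hc) _).1, ← (hbi hc _).2, hEF]
      exact hE.nonneg (star_left_conjugate_nonneg (star_mul_self_nonneg x) c)
  · rw [(hbi h₂ _).2, (hbi h₁ _).1]

end Expectation

/-- for an inclusion `B ⊆ A` of simple unital C*-algebras with a
finite-index conditional expectation and minimal conditional expectation `E₀`, the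
subalgebra `C := C*(B ∪ C_A(B))` belongs to `IMS(B, A, E₀)`: there is a conditional
expectation `F : A → C` with `(E₀|_C) ∘ F = E₀`, and `F` has finite index. -/
theorem genC_mem_IMS
    (B : StarSubalgebra ℂ A) (hBclosed : IsClosed (B : Set A))
    (hAsimple : IsSimpleCStar (Set.univ : Set A))
    (hBsimple : IsSimpleCStar (B : Set A))
    (E : A →ₗ[ℂ] A) (hE : IsCondExp (B : Set A) E)
    (nE : ℕ) (lE : Fin nE → A) (hlE : IsRightQB E lE)
    (E₀ : A →ₗ[ℂ] A) (hE₀ : IsMinimalCondExp (B : Set A) E₀) :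
    ∃ F : A →ₗ[ℂ] A,
      IsCondExp (genC (B : Set A) : Set A) F ∧
      (∀ x : A, E₀ (F x) = E₀ x) ∧
      ∃ (n : ℕ) (l : Fin n → A), IsRightQB F l := by
  rcases subsingleton_or_nontrivial A with hA | hA
  · refine ⟨0, ⟨fun x => ?_, fun _ _ => Subsingleton.elim _ _,
      fun _ => ⟨0, Subsingleton.elim _ _⟩, fun _ _ _ _ _ => Subsingleton.elim _ _⟩,
      fun _ => Subsingleton.elim _ _, 0, Fin.elim0, fun _ => Subsingleton.elim _ _⟩
    exact zero_mem (genC (B : Set A))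
  · -- positivity is handled through the spectral order, which `A` does not carry a priori
    let _ : CStarAlgebra A := {}
    let _ := CStarAlgebra.spectralOrder A
    have _ := CStarAlgebra.spectralOrderedRing A
    obtain ⟨hC, r₀, n, l, hl, hr₀, hmin⟩ := hE₀
    have hsc := fun (d : A) (hd : d ∈ cent (B : Set A)) =>
      hC.exists_scalar hBclosed hBsimple hd
    have hcen := fun (d : A) (hd : d ∈ cent (B : Set A)) (x : A) =>
      minimal_central hBclosed hAsimple hBsimple hC hl hr₀ hmin hd x
    obtain ⟨m, d, hd, hbas⟩ := exists_ortho_basis hC hl hr₀ hsc hcen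
    obtain ⟨hF, hEF⟩ := proj_isCondExp hC hl hcen hd.1 hbas
    exact ⟨proj E₀ d, hF, hEF, proj_quasiBasis hC hl hsc hcen hd.1 hbas⟩

end RegularInclusion
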